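/- arXiv:2510.17112 — 2 statements merged into one kernel-verified Lean document; each statement's English description precedes it below -/
import Mathlib

section
/- For every real α > 0 and every positive integer m, the Minkowski dimension of H^α_m equals 1 − (α/(1+α))^m; equivalently, lim_{δ→0⁺} log λ(V_δ(H^α_m)) / log δ = (α/(1+α))^m. -/
open MeasureTheory Filter Set

/-- The closed `δ`-neighbourhood `V_δ(Ω) = {x : ∃ y ∈ Ω, |x - y| ≤ δ}`. -/
def closedNbhd (Ω : Set ℝ) (δ : ℝ) : Set ℝ := {x : ℝ | ∃ y ∈ Ω, |x - y| ≤ δ}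

/-- `H^α = {1/n^α : n ∈ ℕ, n ≥ 1} ∪ {0}`. -/
noncomputable def Hset (α : ℝ) : Set ℝ :=
  {0} ∪ {x : ℝ | ∃ n : ℕ, 0 < n ∧ x = 1 / (n : ℝ) ^ α}

/-- `H^α_m = H^α + ⋯ + H^α` (`m`-fold arithmetic sumset). -/
noncomputable def HsumSet (α : ℝ) (m : ℕ) : Set ℝ :=
  {x : ℝ | ∃ a : Fin m → ℝ, (∀ i, a i ∈ Hset α) ∧ x = ∑ i, a i}

/-!
Write `β = α / (1 + α)`. The volume of the `δ`-neighbourhood of `H^α_m` is of order `δ ^ β ^ m`, by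
induction on `m`.

*Upper bound.* A point of `H^α_{m+1}` either has a summand among the `N` largest elements of `H^α`,
so that it lies in one of `N` translates of `H^α_m`, or lies in `[0, (m + 1) N ^ (-α)]`. If
`D = δ ^ β ^ m` is the order for `m`, the best choice `N ≈ D ^ (-1 / (1 + α))` balances `N D`
against `N ^ (-α)`, and both are then of order `D ^ β`.

*Lower bound.* Subtracting from `x > 0` the largest element of `H^α` not exceeding it leaves a
remainder at most `α x ^ (1 + 1 / α) = α x ^ (1 / β)`. Hence `m` greedy steps bring every
`x ∈ [0, c δ ^ β ^ m]` within `δ` of `H^α_m`.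
-/

open Asymptotics Metric
open scoped Pointwise Topology Finset

section LogAsymptotics

lemma isBigO_log_sub_log_one_of_isTheta {ι : Type*} {l : Filter ι} {f g : ι → ℝ}
    (h : f =Θ[l] g) :
    (fun x => Real.log (f x) - Real.log (g x)) =O[l] fun _ => (1 : ℝ) := by
  obtain ⟨C, hC, hfg⟩ := h.1.exists_pos
  obtain ⟨c, hc, hgf⟩ := h.2.exists_pos
  refine IsBigO.of_bound (|Real.log C| + |Real.log c|) ?_
  filter_upwards [hfg.bound, hgf.bound] with x hfg hgf
  simp only [Real.norm_eq_abs, abs_one, mul_one] at hfg hgf ⊢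
  rcases eq_or_ne (f x) 0 with hf | hf
  · have hg : g x = 0 := by simpa [hf] using hgf
    rw [hf, hg, sub_self, abs_zero]
    positivity
  · have hg : g x ≠ 0 := fun hg => hf (by simpa [hg] using hfg)
    have hlog_fg : Real.log (f x) ≤ Real.log C + Real.log (g x) := by
      rw [← Real.log_abs (f x), ← Real.log_abs (g x),
        ← Real.log_mul hC.ne' (abs_ne_zero.2 hg)]
      exact Real.log_le_log (abs_pos.2 hf) hfg
    have hlog_gf : Real.log (g x) ≤ Real.log c + Real.log (f x) := by
      rw [← Real.log_abs (f x), ← Real.log_abs (g x),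
        ← Real.log_mul hc.ne' (abs_ne_zero.2 hf)]
      exact Real.log_le_log (abs_pos.2 hg) hgf
    rw [abs_le]
    constructor <;>
      linarith [le_abs_self (Real.log C), le_abs_self (Real.log c), abs_nonneg (Real.log C),
        abs_nonneg (Real.log c)]

lemma tendsto_log_div_log_of_isTheta_rpow {f : ℝ → ℝ} {p : ℝ}
    (hf : f =Θ[𝓝[>] 0] fun δ => δ ^ p) :
    Tendsto (fun δ => Real.log (f δ) / Real.log δ) (𝓝[>] 0) (𝓝 p) := by
  have hlog : Tendsto (norm ∘ Real.log) (𝓝[>] 0) atTop :=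
    tendsto_abs_atBot_atTop.comp Real.tendsto_log_nhdsGT_zero
  have hlittle : (fun δ => Real.log (f δ) - Real.log (δ ^ p)) =o[𝓝[>] 0] Real.log :=
    (isBigO_log_sub_log_one_of_isTheta hf).trans_isLittleO (isLittleO_const_left.2 (.inr hlog))
  have hlim := hlittle.tendsto_div_nhds_zero.add_const p
  rw [zero_add] at hlim
  refine hlim.congr' ?_
  filter_upwards [Ioo_mem_nhdsGT (zero_lt_one' ℝ)] with δ hδ
  have hlogδ : Real.log δ ≠ 0 := (Real.log_neg hδ.1 hδ.2).ne
  rw [Real.log_rpow hδ.1]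
  field_simp
  ring

end LogAsymptotics

section Sumset

lemma sum_Icc_subset_Icc {ι M : Type*} [AddCommMonoid M] [PartialOrder M]
    [IsOrderedAddMonoid M] (s : Finset ι) (a b : ι → M) :
    ∑ i ∈ s, Icc (a i) (b i) ⊆ Icc (∑ i ∈ s, a i) (∑ i ∈ s, b i) := by
  intro x hx
  obtain ⟨g, hg, rfl⟩ := (Set.mem_finsetSum s _ x).1 hx
  exact ⟨Finset.sum_le_sum fun i hi => (hg hi).1, Finset.sum_le_sum fun i hi => (hg hi).2⟩

lemma sum_succ_subset_add_union_sum {M : Type*} [AddCommMonoid M] {A F I : Set M}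
    (hA : A ⊆ F ∪ I) (m : ℕ) :
    ∑ _i : Fin (m + 1), A ⊆ (F + ∑ _i : Fin m, A) ∪ ∑ _i : Fin (m + 1), I := by
  intro x hx
  obtain ⟨a, ha, rfl⟩ := (Set.mem_fintype_sum _ x).1 hx
  by_cases hF : ∃ i, a i ∈ F
  · obtain ⟨i, hi⟩ := hF
    rw [Fin.sum_univ_succAbove a i]
    exact .inl (add_mem_add hi
      ((Set.mem_fintype_sum _ _).2 ⟨fun j => a (i.succAbove j), fun j => ha _, rfl⟩))
  · push Not at hF
    exact .inr ((Set.mem_fintype_sum _ _).2 ⟨a, fun i => (hA (ha i)).resolve_left (hF i), rfl⟩)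

lemma isBounded_sum {ι E : Type*} [SeminormedAddCommGroup E] {s : Finset ι} {A : ι → Set E}
    (hA : ∀ i ∈ s, Bornology.IsBounded (A i)) : Bornology.IsBounded (∑ i ∈ s, A i) :=
  Finset.sum_induction A Bornology.IsBounded (fun _ _ => .add) Bornology.isBounded_singleton hA

lemma measureReal_finset_add_le {G : Type*} [AddGroup G] [MeasurableSpace G] [MeasurableAdd G]
    (μ : Measure G) [μ.IsAddLeftInvariant] (F : Finset G) (s : Set G) :
    μ.real ((F : Set G) + s) ≤ #F * μ.real s := by
  have htranslate (a : G) : μ.real ((a + ·) '' s) = μ.real s := by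
    rw [image_add_left, measureReal_def, measure_preimage_add, measureReal_def]
  calc μ.real ((F : Set G) + s) = μ.real (⋃ a ∈ F, (a + ·) '' s) := by
        simp only [← iUnion_add_left_image, Finset.mem_coe]
    _ ≤ ∑ a ∈ F, μ.real ((a + ·) '' s) := measureReal_biUnion_finset_le F _
    _ = #F * μ.real s := by simp only [htranslate, Finset.sum_const, nsmul_eq_mul]

end Sumset

section ClosedNbhd

lemma closedNbhd_eq_add (Ω : Set ℝ) (δ : ℝ) : closedNbhd Ω δ = Ω + Icc (-δ) δ := by
  ext x
  constructor
  · rintro ⟨y, hy, hxy⟩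
    exact ⟨y, hy, x - y, abs_le.1 hxy, by simp only [add_sub_cancel]⟩
  · rintro ⟨y, hy, z, hz, rfl⟩
    exact ⟨y, hy, by rwa [add_sub_cancel_left, abs_le]⟩

lemma isBounded_closedNbhd {Ω : Set ℝ} (hΩ : Bornology.IsBounded Ω) (δ : ℝ) :
    Bornology.IsBounded (closedNbhd Ω δ) := by
  rw [closedNbhd_eq_add]
  exact hΩ.add (isBounded_Icc _ _)

lemma volume_real_closedNbhd_Icc_le {a b δ : ℝ} (hab : a ≤ b) (hδ : 0 ≤ δ) :
    volume.real (closedNbhd (Icc a b) δ) ≤ b - a + 2 * δ := by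
  rw [closedNbhd_eq_add, Icc_add_Icc hab (by linarith), Real.volume_real_Icc_of_le (by linarith)]
  linarith

lemma volume_real_closedNbhd_sum_succ_le {A : Set ℝ} {F : Finset ℝ} {b δ : ℝ} (hb : 0 ≤ b)
    (hδ : 0 ≤ δ) (hA : A ⊆ F ∪ Icc 0 b) (m : ℕ) :
    volume.real (closedNbhd (∑ _i : Fin (m + 1), A) δ) ≤
      #F * volume.real (closedNbhd (∑ _i : Fin m, A) δ) + ((m + 1) * b + 2 * δ) := by
  have hmb : 0 ≤ (m + 1) * b := by positivity
  have hcover : closedNbhd (∑ _i : Fin (m + 1), A) δ ⊆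
      ((F : Set ℝ) + closedNbhd (∑ _i : Fin m, A) δ) ∪ closedNbhd (Icc 0 ((m + 1) * b)) δ := by
    simp only [closedNbhd_eq_add, ← add_assoc, ← union_add]
    refine add_subset_add_right ((sum_succ_subset_add_union_sum hA m).trans
      (union_subset_union_right _ ?_))
    simpa using sum_Icc_subset_Icc (Finset.univ : Finset (Fin (m + 1))) (fun _ => 0) (fun _ => b)
  have hA_bdd : Bornology.IsBounded A :=
    (F.finite_toSet.isBounded.union (isBounded_Icc 0 b)).subset hA
  have hcover_bdd : Bornology.IsBounded
      (((F : Set ℝ) + closedNbhd (∑ _i : Fin m, A) δ) ∪ closedNbhd (Icc 0 ((m + 1) * b)) δ) :=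
    (F.finite_toSet.isBounded.add (isBounded_closedNbhd (isBounded_sum fun _ _ => hA_bdd) δ)).union
      (isBounded_closedNbhd (isBounded_Icc _ _) δ)
  calc volume.real (closedNbhd (∑ _i : Fin (m + 1), A) δ)
      ≤ volume.real ((F : Set ℝ) + closedNbhd (∑ _i : Fin m, A) δ) +
          volume.real (closedNbhd (Icc 0 ((m + 1) * b)) δ) :=
        (measureReal_mono hcover hcover_bdd.measure_lt_top.ne).trans (measureReal_union_le _ _)
    _ ≤ #F * volume.real (closedNbhd (∑ _i : Fin m, A) δ) + ((m + 1) * b + 2 * δ) := by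
        gcongr
        · exact measureReal_finset_add_le _ _ _
        · simpa only [sub_zero] using volume_real_closedNbhd_Icc_le hmb hδ

end ClosedNbhd

section Hset

variable {α : ℝ}

lemma hsumSet_eq_sum (α : ℝ) (m : ℕ) : HsumSet α m = ∑ _i : Fin m, Hset α := by
  ext x
  simp only [HsumSet, mem_ofPred_eq, Set.mem_fintype_sum, exists_prop, eq_comm]

lemma rpow_neg_natCast_mem_hset {n : ℕ} (hn : 0 < n) : (n : ℝ) ^ (-α) ∈ Hset α :=
  .inr ⟨n, hn, by rw [Real.rpow_neg n.cast_nonneg, one_div]⟩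

lemma exists_finset_hset_subset_union_Icc (hα : 0 ≤ α) {N : ℕ} (hN : 0 < N) :
    ∃ F : Finset ℝ, #F ≤ N ∧ Hset α ⊆ F ∪ Icc 0 ((N : ℝ) ^ (-α)) := by
  refine ⟨(Finset.Icc 1 N).image fun n : ℕ => 1 / (n : ℝ) ^ α,
    Finset.card_image_le.trans_eq (by simp only [Nat.card_Icc, Nat.add_sub_cancel]), ?_⟩
  rintro _ (rfl | ⟨n, hn, rfl⟩)
  · exact .inr ⟨le_rfl, by positivity⟩
  · rcases le_or_gt n N with hnN | hNn
    · exact .inl (Finset.mem_image_of_mem _ (Finset.mem_Icc.2 ⟨hn, hnN⟩))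
    · refine .inr ⟨by positivity, ?_⟩
      rw [one_div, ← Real.rpow_neg n.cast_nonneg]
      exact Real.rpow_le_rpow_of_nonpos (by exact_mod_cast hN) (by exact_mod_cast hNn.le)
        (neg_nonpos.2 hα)

lemma isBounded_hsumSet (hα : 0 ≤ α) (m : ℕ) : Bornology.IsBounded (HsumSet α m) := by
  obtain ⟨F, -, hF⟩ := exists_finset_hset_subset_union_Icc hα one_pos
  rw [hsumSet_eq_sum]
  exact isBounded_sum fun _ _ => (F.finite_toSet.isBounded.union (isBounded_Icc _ _)).subset hF

end Hset

section UpperBound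

variable {α : ℝ}

lemma exists_nat_mul_le_and_rpow_neg_le {D : ℝ} (hα : 0 < α) (hD : 0 < D) (hD1 : D ≤ 1) :
    ∃ N : ℕ, 0 < N ∧ N * D ≤ 2 * D ^ (α / (1 + α)) ∧ (N : ℝ) ^ (-α) ≤ D ^ (α / (1 + α)) := by
  -- The power `t` of `D` for which `t * D = t ^ (-α)`.
  set t := D ^ (-(1 + α)⁻¹) with ht
  have ht_one : 1 ≤ t :=
    Real.one_le_rpow_of_pos_of_le_one_of_nonpos hD hD1 (neg_nonpos.2 (by positivity))
  have ht_pos : 0 < t := one_pos.trans_le ht_one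
  have ht_mul : t * D = D ^ (α / (1 + α)) := by
    rw [ht, ← Real.rpow_add_one hD.ne']
    congr 1
    field_simp
    ring
  have ht_rpow : t ^ (-α) = D ^ (α / (1 + α)) := by
    rw [ht, ← Real.rpow_mul hD.le]
    congr 1
    field_simp
  refine ⟨⌈t⌉₊, Nat.ceil_pos.2 ht_pos, ?_, ?_⟩
  · rw [← ht_mul, ← mul_assoc]
    gcongr
    linarith [Nat.ceil_lt_add_one ht_pos.le]
  · rw [← ht_rpow]
    exact Real.rpow_le_rpow_of_nonpos ht_pos (Nat.le_ceil t) (neg_nonpos.2 hα.le)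

lemma exists_volume_real_closedNbhd_hsumSet_le (hα : 0 < α) (m : ℕ) :
    ∃ C : ℝ, 0 ≤ C ∧ ∀ δ ∈ Ioc (0 : ℝ) 1,
      volume.real (closedNbhd (HsumSet α m) δ) ≤ C * δ ^ (α / (1 + α)) ^ m := by
  simp only [hsumSet_eq_sum]
  induction m with
  | zero =>
    refine ⟨2, zero_le_two, fun δ hδ => ?_⟩
    simpa [← singleton_zero] using volume_real_closedNbhd_Icc_le (le_refl (0 : ℝ)) hδ.1.le
  | succ m ih =>
    obtain ⟨C, hC, ih⟩ := ih
    refine ⟨2 * C + (m + 3), by positivity, fun δ hδ => ?_⟩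
    have hβ : 0 < α / (1 + α) := by positivity
    have hβ1 : α / (1 + α) ≤ 1 := by rw [div_le_one (by positivity)]; linarith
    set β := α / (1 + α)
    set D := δ ^ β ^ m
    have hD : 0 < D := Real.rpow_pos_of_pos hδ.1 _
    have hDβ : δ ^ β ^ (m + 1) = D ^ β := by rw [← Real.rpow_mul hδ.1.le, pow_succ]
    have hδD : δ ≤ D ^ β := by
      rw [← hDβ]
      exact Real.self_le_rpow_of_le_one hδ.1.le hδ.2 (pow_le_one₀ hβ.le hβ1)
    obtain ⟨N, hN, hND, hNα⟩ := exists_nat_mul_le_and_rpow_neg_le hα hD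
      (Real.rpow_le_one hδ.1.le hδ.2 (by positivity))
    obtain ⟨F, hFN, hF⟩ := exists_finset_hset_subset_union_Icc hα.le hN
    calc volume.real (closedNbhd (∑ _i : Fin (m + 1), Hset α) δ)
        ≤ #F * volume.real (closedNbhd (∑ _i : Fin m, Hset α) δ) +
            ((m + 1) * (N : ℝ) ^ (-α) + 2 * δ) :=
          volume_real_closedNbhd_sum_succ_le (by positivity) hδ.1.le hF m
      _ ≤ N * (C * D) + ((m + 1) * D ^ β + 2 * D ^ β) := by
          gcongr
          exact ih δ hδ
      _ = C * (N * D) + (m + 3) * D ^ β := by ring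
      _ ≤ C * (2 * D ^ β) + (m + 3) * D ^ β := by gcongr
      _ = (2 * C + (m + 3)) * δ ^ β ^ (m + 1) := by rw [hDβ]; ring

end UpperBound

section LowerBound

lemma one_sub_mul_le_one_add_rpow_neg {a s : ℝ} (ha : 0 ≤ a) (hs : -1 < s) :
    1 - a * s ≤ (1 + s) ^ (-a) := by
  have hs' : 0 < 1 + s := by linarith
  calc 1 - a * s ≤ -a * Real.log (1 + s) + 1 := by
        linarith [mul_le_mul_of_nonneg_left (Real.log_le_sub_one_of_pos hs') ha]
    _ ≤ Real.exp (-a * Real.log (1 + s)) := Real.add_one_le_exp _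
    _ = (1 + s) ^ (-a) := by rw [Real.rpow_def_of_pos hs', mul_comm]

lemma rpow_neg_sub_rpow_neg_add_one_le {a t : ℝ} (ha : 0 ≤ a) (ht : 0 < t) :
    t ^ (-a) - (t + 1) ^ (-a) ≤ a * (t ^ (-a) * t⁻¹) := by
  have hsplit : (t + 1) ^ (-a) = t ^ (-a) * (1 + t⁻¹) ^ (-a) := by
    rw [← Real.mul_rpow ht.le (by positivity), mul_add, mul_one, mul_inv_cancel₀ ht.ne']
  have hbernoulli : 1 - a * t⁻¹ ≤ (1 + t⁻¹) ^ (-a) :=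
    one_sub_mul_le_one_add_rpow_neg ha (by linarith [inv_pos.2 ht])
  rw [hsplit]
  linarith [mul_le_mul_of_nonneg_left hbernoulli (Real.rpow_nonneg ht.le (-a))]

variable {α : ℝ}

lemma exists_mem_hset_sub_le (hα : 0 < α) {x : ℝ} (hx : 0 ≤ x) :
    ∃ h ∈ Hset α, h ≤ x ∧ x - h ≤ α * x ^ (1 + α⁻¹) := by
  rcases hx.eq_or_lt with rfl | hx
  · exact ⟨0, .inl rfl, le_rfl, by rw [sub_self]; positivity⟩
  -- The largest element of `Hset α` below `x = t ^ (-α)` is `⌈t⌉₊ ^ (-α)`.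
  set t := x ^ (-α⁻¹) with ht
  have ht_pos : 0 < t := Real.rpow_pos_of_pos hx _
  have ht_rpow : t ^ (-α) = x := by
    rw [ht, ← Real.rpow_mul hx.le, neg_mul_neg, inv_mul_cancel₀ hα.ne', Real.rpow_one]
  have ht_inv : t ^ (-α) * t⁻¹ = x ^ (1 + α⁻¹) := by
    rw [ht_rpow, ht, Real.rpow_neg hx.le, inv_inv, Real.rpow_one_add' hx.le (by positivity)]
  have hn : 0 < ⌈t⌉₊ := Nat.ceil_pos.2 ht_pos
  refine ⟨(⌈t⌉₊ : ℝ) ^ (-α), rpow_neg_natCast_mem_hset hn, ?_, ?_⟩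
  · calc (⌈t⌉₊ : ℝ) ^ (-α) ≤ t ^ (-α) :=
          Real.rpow_le_rpow_of_nonpos ht_pos (Nat.le_ceil t) (neg_nonpos.2 hα.le)
      _ = x := ht_rpow
  · calc x - (⌈t⌉₊ : ℝ) ^ (-α) ≤ t ^ (-α) - (t + 1) ^ (-α) := by
          rw [ht_rpow]
          exact sub_le_sub_left (Real.rpow_le_rpow_of_nonpos (Nat.cast_pos.2 hn)
            (Nat.ceil_lt_add_one ht_pos.le).le (neg_nonpos.2 hα.le)) x
      _ ≤ α * (t ^ (-α) * t⁻¹) := rpow_neg_sub_rpow_neg_add_one_le hα.le ht_pos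
      _ = α * x ^ (1 + α⁻¹) := by rw [ht_inv]

lemma Icc_subset_hset_add_Icc (hα : 0 < α) (r : ℝ) :
    Icc 0 r ⊆ Hset α + Icc 0 (α * r ^ (1 + α⁻¹)) := by
  rintro x ⟨hx, hxr⟩
  obtain ⟨h, hh, hhx, hsub⟩ := exists_mem_hset_sub_le hα hx
  exact ⟨h, hh, x - h, ⟨sub_nonneg.2 hhx, hsub.trans (by gcongr)⟩, add_sub_cancel h x⟩

lemma exists_Icc_subset_hsumSet_add_Icc (hα : 0 < α) (m : ℕ) :
    ∃ c : ℝ, 0 < c ∧ ∀ δ : ℝ, 0 < δ →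
      Icc 0 (c * δ ^ (α / (1 + α)) ^ m) ⊆ HsumSet α m + Icc 0 δ := by
  simp only [hsumSet_eq_sum]
  induction m with
  | zero => exact ⟨1, one_pos, fun δ _ => by simp⟩
  | succ m ih =>
    obtain ⟨c, hc, ih⟩ := ih
    have hβ : 0 < α / (1 + α) := by positivity
    have hβ_inv : 1 + α⁻¹ = (α / (1 + α))⁻¹ := by field_simp; ring
    set β := α / (1 + α)
    refine ⟨(c / α) ^ β, by positivity, fun δ hδ => ?_⟩
    have hrpow : ((c / α) ^ β * δ ^ β ^ (m + 1)) ^ (1 + α⁻¹) = c / α * δ ^ β ^ m := by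
      rw [hβ_inv, pow_succ, Real.rpow_mul hδ.le, ← Real.mul_rpow (by positivity) (by positivity),
        Real.rpow_rpow_inv (by positivity) hβ.ne']
    calc Icc 0 ((c / α) ^ β * δ ^ β ^ (m + 1))
        ⊆ Hset α + Icc 0 (c * δ ^ β ^ m) := by
          have hgreedy := Icc_subset_hset_add_Icc hα ((c / α) ^ β * δ ^ β ^ (m + 1))
          rwa [hrpow, ← mul_assoc, mul_div_cancel₀ _ hα.ne'] at hgreedy
      _ ⊆ Hset α + (∑ _i : Fin m, Hset α + Icc 0 δ) := add_subset_add_left (ih δ hδ)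
      _ = ∑ _i : Fin (m + 1), Hset α + Icc 0 δ := by rw [Fin.sum_univ_succ, add_assoc]

lemma exists_le_volume_real_closedNbhd_hsumSet (hα : 0 < α) (m : ℕ) :
    ∃ c : ℝ, 0 < c ∧ ∀ δ : ℝ, 0 < δ →
      c * δ ^ (α / (1 + α)) ^ m ≤ volume.real (closedNbhd (HsumSet α m) δ) := by
  obtain ⟨c, hc, hcover⟩ := exists_Icc_subset_hsumSet_add_Icc hα m
  refine ⟨c, hc, fun δ hδ => ?_⟩
  have hsub : Icc 0 (c * δ ^ (α / (1 + α)) ^ m) ⊆ closedNbhd (HsumSet α m) δ := by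
    rw [closedNbhd_eq_add]
    exact (hcover δ hδ).trans
      (add_subset_add_left (Icc_subset_Icc_left (neg_nonpos.2 hδ.le)))
  calc c * δ ^ (α / (1 + α)) ^ m = volume.real (Icc 0 (c * δ ^ (α / (1 + α)) ^ m)) := by
        rw [Real.volume_real_Icc_of_le (by positivity), sub_zero]
    _ ≤ volume.real (closedNbhd (HsumSet α m) δ) :=
        measureReal_mono hsub
          (isBounded_closedNbhd (isBounded_hsumSet hα.le m) δ).measure_lt_top.ne

end LowerBound

lemma volume_real_closedNbhd_hsumSet_isTheta {α : ℝ} (hα : 0 < α) (m : ℕ) :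
    (fun δ => volume.real (closedNbhd (HsumSet α m) δ))
      =Θ[𝓝[>] 0] fun δ => δ ^ (α / (1 + α)) ^ m := by
  obtain ⟨C, -, hupper⟩ := exists_volume_real_closedNbhd_hsumSet_le hα m
  obtain ⟨c, hc, hlower⟩ := exists_le_volume_real_closedNbhd_hsumSet hα m
  refine ⟨IsBigO.of_bound C ?_, IsBigO.of_bound c⁻¹ ?_⟩
  · filter_upwards [Ioc_mem_nhdsGT (zero_lt_one' ℝ)] with δ hδ
    rw [Real.norm_of_nonneg measureReal_nonneg, Real.norm_of_nonneg (Real.rpow_nonneg hδ.1.le _)]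
    exact hupper δ hδ
  · filter_upwards [self_mem_nhdsWithin] with δ (hδ : 0 < δ)
    rw [Real.norm_of_nonneg measureReal_nonneg, Real.norm_of_nonneg (Real.rpow_nonneg hδ.le _),
      le_inv_mul_iff₀ hc]
    exact hlower δ hδ

/-- For `α > 0`, the Minkowski dimension of `H^α_m` is `1 - (α/(1+α))^m`:
`lim_{δ → 0⁺} log λ(V_δ(H^α_m)) / log δ = (α/(1+α))^m`. -/
theorem minkowski_dim_Ham (α : ℝ) (hα : 0 < α) (m : ℕ) (hm : 0 < m) :
    Tendsto
      (fun δ : ℝ => Real.log (volume (closedNbhd (HsumSet α m) δ)).toReal / Real.log δ)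
      (nhdsWithin (0 : ℝ) (Set.Ioi 0)) (nhds ((α / (1 + α)) ^ m)) := by
  exact tendsto_log_div_log_of_isTheta_rpow (volume_real_closedNbhd_hsumSet_isTheta hα m)
end

section
/- For every positive integer m, the Minkowski dimension of E_m^* equals m/(m+1); equivalently, lim_{δ→0⁺} log λ(V_δ(E_m^*)) / log δ = 1/(m+1). -/
open MeasureTheory Filter Set

/-- One step of the Engel expansion algorithm: `x ↦ ⌈1/x⌉ · x - 1`. -/
noncomputable def engelStep (x : ℝ) : ℝ := (⌈1 / x⌉ : ℝ) * x - 1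

/-- The Engel algorithm iterates: `engelIter x i = x_{i+1}`, where `x₁ = x` and
`x_{i+1} = aᵢ xᵢ - 1` with `aᵢ = ⌈1/xᵢ⌉`. -/
noncomputable def engelIter (x : ℝ) (i : ℕ) : ℝ := engelStep^[i] x

/-- The Engel fraction of `x` has length `k`: the algorithm stays positive for the
first `k` steps and terminates with `x_{k+1} = 0`. -/
def engelLength (x : ℝ) (k : ℕ) : Prop :=
  (∀ i, i < k → 0 < engelIter x i) ∧ engelIter x k = 0

/-- `E_m^*`: the set of rationals `x ∈ (0,1]` whose Engel fraction has length `m`. -/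
def EstarSet (m : ℕ) : Set ℝ :=
  {x : ℝ | (∃ q : ℚ, (q : ℝ) = x) ∧ x ∈ Set.Ioc (0 : ℝ) 1 ∧ engelLength x m}

/-!
The inverse branches of the Engel step are `y ↦ (1 + y) / a`, and every point of `[0, 1]` whose
Engel fraction has length `m + 1` is the image under one of them of a point of `[0, 1]` whose Engel
fraction has length `m`.

Upper bound: let `S ⊆ [0, 1]` have a `δ`-neighbourhood of measure `O(δ ^ s)`. The branch of digit
`a` maps it to a set whose `δ`-neighbourhood has measure `a⁻¹ O((a δ) ^ s)`, while all the branches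
of digit `> N` land in `[0, 2 / N]`. For `N ≈ δ ^ (-s / (1 + s))` both contributions are
`O(δ ^ (s / (1 + s)))`, and `s ↦ s / (1 + s)` sends `1 / (m + 1)` to `1 / (m + 2)`.

Lower bound: for `i = 0, …, m - 1`, take a digit freely in `[2 + i N, 2 + (i + 1) N)`. This gives
`N ^ m` points. All digits are at most `L = 2 + m N`, so an Engel sum `z` with `k` digits, all
greater than `a`, satisfies `1 - a z ≥ L ^ (-k)`, and therefore two distinct points differ by at
least `L ^ (-(m + 1))`. For `N` a small multiple of `δ ^ (-1 / (m + 1))` their `δ`-neighbourhoods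
are disjoint and have total measure of order `N ^ m δ`, that is, `δ ^ (1 / (m + 1))`.
-/

open Asymptotics Topology

/-! ### Logarithms of functions of the same order -/

theorem isBigO_log_sub_log_one {α : Type*} {l : Filter α} {f g : α → ℝ} (hfg : f =Θ[l] g)
    (hg : ∀ᶠ x in l, g x ≠ 0) :
    (fun x => Real.log (f x) - Real.log (g x)) =O[l] fun _ => (1 : ℝ) := by
  obtain ⟨C, hC, hfC⟩ := hfg.1.exists_pos
  obtain ⟨D, hD, hgD⟩ := hfg.2.exists_pos
  refine IsBigO.of_bound (|Real.log C| + |Real.log D|) ?_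
  filter_upwards [hfC.bound, hgD.bound, hg] with x hfx hgx hgx0
  have hg_pos : 0 < ‖g x‖ := norm_pos_iff.2 hgx0
  have hf_pos : 0 < ‖f x‖ := pos_of_mul_pos_right (hg_pos.trans_le hgx) hD.le
  have hf_le := Real.log_le_log hf_pos hfx
  have hg_le := Real.log_le_log hg_pos hgx
  rw [Real.log_mul hC.ne' hg_pos.ne', Real.norm_eq_abs, Real.norm_eq_abs, Real.log_abs,
    Real.log_abs] at hf_le
  rw [Real.log_mul hD.ne' hf_pos.ne', Real.norm_eq_abs, Real.norm_eq_abs, Real.log_abs,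
    Real.log_abs] at hg_le
  rw [norm_one, mul_one, Real.norm_eq_abs, abs_le]
  constructor <;>
    linarith [le_abs_self (Real.log C), le_abs_self (Real.log D), abs_nonneg (Real.log C),
      abs_nonneg (Real.log D)]

theorem tendsto_log_div_log_of_isTheta_rpow_s6 {α : Type*} {l : Filter α} {f u : α → ℝ} {s : ℝ}
    (hu : Tendsto u l (𝓝[>] 0)) (hf : f =Θ[l] fun x => u x ^ s) :
    Tendsto (fun x => Real.log (f x) / Real.log (u x)) l (𝓝 s) := by
  have hu_pos : ∀ᶠ x in l, 0 < u x := hu.eventually self_mem_nhdsWithin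
  have hlog : Tendsto (fun x => Real.log (u x)) l atBot := Real.tendsto_log_nhdsGT_zero.comp hu
  have herror : (fun x => Real.log (f x) - Real.log (u x ^ s)) =o[l] fun x => Real.log (u x) :=
    (isBigO_log_sub_log_one hf
      (hu_pos.mono fun x hx => (Real.rpow_pos_of_pos hx s).ne')).trans_isLittleO
      ((isLittleO_const_id_atBot (1 : ℝ)).comp_tendsto hlog)
  have hlim := herror.tendsto_div_nhds_zero.add_const s
  rw [zero_add] at hlim
  refine hlim.congr' ?_
  filter_upwards [hu_pos, hlog.eventually_ne_atBot 0] with x hx hx0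
  rw [Real.log_rpow hx]
  field_simp
  ring

/-! ### Neighbourhoods and their measure -/

theorem closedNbhd_mono {S T : Set ℝ} (h : S ⊆ T) (δ : ℝ) : closedNbhd S δ ⊆ closedNbhd T δ :=
  fun _ ⟨y, hy, hxy⟩ => ⟨y, h hy, hxy⟩

theorem closedNbhd_subset_Icc {S : Set ℝ} {a b : ℝ} (h : S ⊆ Icc a b) (δ : ℝ) :
    closedNbhd S δ ⊆ Icc (a - δ) (b + δ) := by
  rintro x ⟨y, hy, hxy⟩
  obtain ⟨hay, hyb⟩ := h hy
  obtain ⟨hl, hr⟩ := abs_le.1 hxy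
  constructor <;> linarith

theorem volume_closedNbhd_ne_top {S : Set ℝ} (h : Bornology.IsBounded S) (δ : ℝ) :
    volume (closedNbhd S δ) ≠ ⊤ := by
  obtain ⟨r, hr⟩ := h.subset_closedBall 0
  rw [Real.closedBall_eq_Icc] at hr
  exact measure_ne_top_of_subset (closedNbhd_subset_Icc hr δ) measure_Icc_lt_top.ne

theorem volume_real_closedNbhd_image_add_div {c : ℝ} (hc : 0 < c) (b : ℝ) (S : Set ℝ) (δ : ℝ) :
    volume.real (closedNbhd ((fun y => (b + y) / c) '' S) δ) =
      c⁻¹ * volume.real (closedNbhd S (c * δ)) := by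
  have hpreimage : closedNbhd ((fun y => (b + y) / c) '' S) δ =
      (fun x => c * x) ⁻¹' ((fun x => x + -b) ⁻¹' closedNbhd S (c * δ)) := by
    ext x
    simp only [closedNbhd, exists_mem_image, mem_ofPred_eq, mem_preimage]
    refine exists_congr fun y => and_congr_right fun _ => ?_
    have hscale : c * x + -b - y = c * (x - (b + y) / c) := by field_simp; ring
    rw [hscale, abs_mul, abs_of_pos hc, mul_le_mul_iff_right₀ hc]
  rw [hpreimage, measureReal_def, Real.volume_preimage_mul_left hc.ne',
    measure_preimage_add_right, ENNReal.toReal_mul, abs_of_pos (inv_pos.2 hc),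
    ENNReal.toReal_ofReal (inv_pos.2 hc).le, measureReal_def]

theorem card_mul_le_volume_real_closedNbhd {P : Finset ℝ} {δ : ℝ} (hδ : 0 ≤ δ)
    (hsep : (P : Set ℝ).Pairwise fun x y => 2 * δ < |x - y|) :
    P.card * (2 * δ) ≤ volume.real (closedNbhd P δ) := by
  have hunion : (⋃ p ∈ P, Metric.closedBall p δ) = closedNbhd P δ := by
    ext x
    simp [closedNbhd, Real.dist_eq]
  have hdisj : (P : Set ℝ).PairwiseDisjoint fun p => Metric.closedBall p δ :=
    fun p hp q hq hpq => Metric.closedBall_disjoint_closedBall (by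
      rw [Real.dist_eq, ← two_mul]
      exact hsep hp hq hpq)
  rw [← hunion, measureReal_biUnion_finset hdisj
    (fun p _ => Metric.isClosed_closedBall.measurableSet)
    (fun p _ => measure_closedBall_lt_top.ne)]
  simp [Real.volume_real_closedBall hδ]

/-! ### The Engel step and its inverse branches -/

/-- The inverse branch `y ↦ (1 + y) / a` of the Engel step, which prepends the digit `a` to the
Engel fraction of `y`. -/
noncomputable def engelBranch (a : ℕ) (y : ℝ) : ℝ := (1 + y) / a

/-- The points of `[0, 1]` whose Engel fraction has length `m`. Unlike `EstarSet m`, it is `{0}`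
for `m = 0`, which makes it the right object for an induction on `m`. -/
def engelLengthSet (m : ℕ) : Set ℝ := {x | x ∈ Icc 0 1 ∧ engelLength x m}

theorem engelLength_zero_iff {x : ℝ} : engelLength x 0 ↔ x = 0 := by
  simp [engelLength, engelIter]

theorem engelLength_succ_iff {x : ℝ} {k : ℕ} :
    engelLength x (k + 1) ↔ 0 < x ∧ engelLength (engelStep x) k := by
  simp only [engelLength, engelIter, Function.iterate_succ_apply, Nat.forall_lt_succ_left,
    Function.iterate_zero_apply, and_assoc]

theorem engelBranch_pos {a : ℕ} {y : ℝ} (ha : 0 < a) (hy : 0 ≤ y) : 0 < engelBranch a y := by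
  have ha' : (0 : ℝ) < a := by exact_mod_cast ha
  exact div_pos (by linarith) ha'

theorem engelBranch_left_inj {a b : ℕ} {y : ℝ} (hy : 1 + y ≠ 0) :
    engelBranch a y = engelBranch b y ↔ a = b := by
  rw [engelBranch, engelBranch, div_eq_mul_inv, div_eq_mul_inv, mul_right_inj' hy, inv_inj,
    Nat.cast_inj]

theorem iUnion_image_engelBranch_subset_Icc {S : Set ℝ} (hS : S ⊆ Icc 0 1) :
    ⋃ a > 0, engelBranch a '' S ⊆ Icc 0 2 := by
  refine iUnion₂_subset fun a ha => ?_
  rintro _ ⟨y, hy, rfl⟩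
  obtain ⟨hy0, hy1⟩ := hS hy
  exact ⟨(engelBranch_pos ha hy0).le,
    (div_le_self (by linarith) (by exact_mod_cast ha)).trans (by linarith)⟩

theorem engelStep_nonneg {x : ℝ} (hx : 0 < x) : 0 ≤ engelStep x := by
  have h : 1 / x ≤ ⌈1 / x⌉ := Int.le_ceil _
  rw [div_le_iff₀ hx] at h
  exact sub_nonneg.2 h

theorem engelStep_lt_self {x : ℝ} (hx : 0 < x) : engelStep x < x := by
  have h : (⌈1 / x⌉ : ℝ) < 1 / x + 1 := Int.ceil_lt_add_one _
  calc engelStep x < (1 / x + 1) * x - 1 := by unfold engelStep; gcongr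
    _ = x := by field_simp; ring

theorem engelBranch_natCeil_engelStep {x : ℝ} (hx : 0 < x) :
    engelBranch ⌈1 / x⌉₊ (engelStep x) = x := by
  have : 0 < (⌈1 / x⌉ : ℝ) := by exact_mod_cast Int.ceil_pos.2 (one_div_pos.2 hx)
  rw [engelBranch, engelStep, natCast_ceil_eq_intCast_ceil (one_div_pos.2 hx).le]
  field_simp
  ring

theorem engelStep_engelBranch {a : ℕ} {y : ℝ} (ha : 0 < a) (hy : 0 ≤ y)
    (hay : ((a : ℝ) - 1) * y < 1) : engelStep (engelBranch a y) = y := by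
  have : (0 : ℝ) < a := by exact_mod_cast ha
  have hdigit : ⌈1 / engelBranch a y⌉ = (a : ℤ) := by
    rw [engelBranch, one_div_div, Int.ceil_eq_iff, lt_div_iff₀ (by linarith),
      div_le_iff₀ (by linarith)]
    push_cast
    constructor <;> nlinarith
  rw [engelStep, hdigit, engelBranch]
  push_cast
  field_simp
  ring

theorem exists_ratCast_eq_of_engelLength {k : ℕ} {x : ℝ} (h : engelLength x k) :
    ∃ q : ℚ, (q : ℝ) = x := by
  induction k generalizing x with
  | zero => exact ⟨0, by rw [engelLength_zero_iff.1 h, Rat.cast_zero]⟩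
  | succ k ih =>
    obtain ⟨hx, hstep⟩ := engelLength_succ_iff.1 h
    obtain ⟨q, hq⟩ := ih hstep
    refine ⟨(1 + q) / ⌈1 / x⌉₊, ?_⟩
    push_cast
    rw [hq]
    exact engelBranch_natCeil_engelStep hx

theorem EstarSet_eq_engelLengthSet {m : ℕ} (hm : 0 < m) : EstarSet m = engelLengthSet m := by
  ext x
  refine ⟨fun ⟨_, hx, hlen⟩ => ⟨Ioc_subset_Icc_self hx, hlen⟩, fun ⟨hx, hlen⟩ => ?_⟩
  exact ⟨exists_ratCast_eq_of_engelLength hlen, ⟨hlen.1 0 hm, hx.2⟩, hlen⟩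

theorem engelLengthSet_zero : engelLengthSet 0 = {0} := by
  ext x
  simp +contextual [engelLengthSet, engelLength_zero_iff]

theorem engelLengthSet_subset_Icc (m : ℕ) : engelLengthSet m ⊆ Icc 0 1 := fun _ hx => hx.1

theorem engelLengthSet_succ_subset (k : ℕ) :
    engelLengthSet (k + 1) ⊆ ⋃ a > 0, engelBranch a '' engelLengthSet k := by
  rintro x ⟨⟨_, hx1⟩, hlen⟩
  obtain ⟨hx, hstep⟩ := engelLength_succ_iff.1 hlen
  refine mem_iUnion₂.2 ⟨⌈1 / x⌉₊, Nat.ceil_pos.2 (one_div_pos.2 hx), engelStep x, ⟨⟨?_, ?_⟩, hstep⟩,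
    engelBranch_natCeil_engelStep hx⟩
  · exact engelStep_nonneg hx
  · exact (engelStep_lt_self hx).le.trans hx1

/-! ### Upper bound -/

theorem sum_Icc_rpow_sub_one_le {s : ℝ} (hs : 0 < s) (hs1 : s ≤ 1) (N : ℕ) :
    ∑ a ∈ Finset.Icc 1 N, (a : ℝ) ^ (s - 1) ≤ (N : ℝ) ^ s / s := by
  induction N with
  | zero => simp [Real.zero_rpow hs.ne']
  | succ n ih =>
    have hn : (0 : ℝ) < n + 1 := by positivity
    have hbernoulli : ((n : ℝ) / (n + 1)) ^ s ≤ 1 + s * (-1 / (n + 1)) := by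
      have h := rpow_one_add_le_one_add_mul_self (s := -1 / ((n : ℝ) + 1)) (p := s)
        (by rw [le_div_iff₀ hn]; linarith [n.cast_nonneg (α := ℝ)]) hs.le hs1
      rwa [show 1 + -1 / ((n : ℝ) + 1) = n / (n + 1) by field_simp; ring] at h
    rw [Real.div_rpow n.cast_nonneg hn.le, div_le_iff₀ (by positivity)] at hbernoulli
    rw [Finset.sum_Icc_succ_top (by lia)]
    push_cast
    calc _ ≤ (n : ℝ) ^ s / s + ((n : ℝ) + 1) ^ (s - 1) := by gcongr
      _ ≤ (1 + s * (-1 / (n + 1))) * (n + 1) ^ s / s + ((n : ℝ) + 1) ^ (s - 1) := by gcongr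
      _ = ((n : ℝ) + 1) ^ s / s := by
        rw [Real.rpow_sub_one hn.ne']
        field_simp
        ring

theorem sum_Icc_inv_mul_le_of_le_rpow {V : ℝ → ℝ} {s C : ℝ} (hs : 0 < s) (hs1 : s ≤ 1)
    (hC0 : 0 ≤ C) (hC : ∀ δ ∈ Ioc 0 1, V δ ≤ C * δ ^ s) {N : ℕ} {δ : ℝ} (hδ : 0 < δ)
    (hNδ : N * δ ≤ 1) :
    ∑ a ∈ Finset.Icc 1 N, (a : ℝ)⁻¹ * V (a * δ) ≤ C / s * (N * δ) ^ s := by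
  have hterm : ∀ a ∈ Finset.Icc 1 N, (a : ℝ)⁻¹ * V (a * δ) ≤ C * δ ^ s * (a : ℝ) ^ (s - 1) := by
    intro a ha
    obtain ⟨ha1, haN⟩ := Finset.mem_Icc.1 ha
    have ha0 : (0 : ℝ) < a := by exact_mod_cast ha1
    have haδ : a * δ ≤ 1 := le_trans (by gcongr) hNδ
    calc _ ≤ (a : ℝ)⁻¹ * (C * (a * δ) ^ s) := by gcongr; exact hC _ ⟨by positivity, haδ⟩
      _ = _ := by rw [Real.mul_rpow ha0.le hδ.le, Real.rpow_sub_one ha0.ne']; ring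
  calc _ ≤ ∑ a ∈ Finset.Icc 1 N, C * δ ^ s * (a : ℝ) ^ (s - 1) := Finset.sum_le_sum hterm
    _ ≤ C * δ ^ s * ((N : ℝ) ^ s / s) := by
      rw [← Finset.mul_sum]
      gcongr
      exact sum_Icc_rpow_sub_one_le hs hs1 N
    _ = C / s * (N * δ) ^ s := by rw [Real.mul_rpow N.cast_nonneg hδ.le]; ring

theorem closedNbhd_iUnion_image_engelBranch_subset {S : Set ℝ} (hS : S ⊆ Icc 0 1) {N : ℕ}
    (hN : 0 < N) (δ : ℝ) :
    closedNbhd (⋃ a > 0, engelBranch a '' S) δ ⊆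
      (⋃ a ∈ Finset.Icc 1 N, closedNbhd (engelBranch a '' S) δ) ∪ Icc (0 - δ) (2 / N + δ) := by
  rintro x ⟨z, hz, hxz⟩
  obtain ⟨a, ha, y, hy, rfl⟩ := mem_iUnion₂.1 hz
  rcases le_or_gt a N with haN | haN
  · exact Or.inl (mem_iUnion₂.2 ⟨a, Finset.mem_Icc.2 ⟨ha, haN⟩, _, mem_image_of_mem _ hy, hxz⟩)
  · have hle : engelBranch a y ≤ 2 / N := by
      have hy1 := (hS hy).2
      unfold engelBranch
      gcongr
      linarith
    exact Or.inr (closedNbhd_subset_Icc (singleton_subset_iff.2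
      ⟨(engelBranch_pos ha (hS hy).1).le, hle⟩) δ ⟨_, rfl, hxz⟩)

theorem volume_real_closedNbhd_iUnion_image_engelBranch_le {S : Set ℝ} (hS : S ⊆ Icc 0 1) {N : ℕ}
    (hN : 0 < N) {δ : ℝ} (hδ : 0 ≤ δ) :
    volume.real (closedNbhd (⋃ a > 0, engelBranch a '' S) δ) ≤
      ∑ a ∈ Finset.Icc 1 N, (a : ℝ)⁻¹ * volume.real (closedNbhd S (a * δ)) + (2 / N + 2 * δ) := by
  have hbranch : ∀ a ∈ Finset.Icc 1 N, volume.real (closedNbhd (engelBranch a '' S) δ) =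
      (a : ℝ)⁻¹ * volume.real (closedNbhd S (a * δ)) := fun a ha =>
    volume_real_closedNbhd_image_add_div (by exact_mod_cast (Finset.mem_Icc.1 ha).1) 1 S δ
  have hfinite : ∀ a ∈ Finset.Icc 1 N, volume (closedNbhd (engelBranch a '' S) δ) < ⊤ :=
    fun a ha => (volume_closedNbhd_ne_top ((Metric.isBounded_Icc 0 2).subset
      ((subset_biUnion_of_mem (u := fun a => engelBranch a '' S) (Finset.mem_Icc.1 ha).1).trans
        (iUnion_image_engelBranch_subset_Icc hS))) δ).lt_top
  have htail : volume.real (Icc (0 - δ) (2 / (N : ℝ) + δ)) = 2 / N + 2 * δ := by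
    rw [Real.volume_real_Icc_of_le (by linarith [show (0 : ℝ) ≤ 2 / N by positivity])]
    ring
  calc _ ≤ volume.real ((⋃ a ∈ Finset.Icc 1 N, closedNbhd (engelBranch a '' S) δ) ∪
          Icc (0 - δ) (2 / N + δ)) :=
        measureReal_mono (closedNbhd_iUnion_image_engelBranch_subset hS hN δ) <|
          measure_union_ne_top (measure_biUnion_lt_top (Finset.finite_toSet _) hfinite).ne
            measure_Icc_lt_top.ne
    _ ≤ volume.real (⋃ a ∈ Finset.Icc 1 N, closedNbhd (engelBranch a '' S) δ) +
          volume.real (Icc (0 - δ) (2 / (N : ℝ) + δ)) := measureReal_union_le _ _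
    _ ≤ ∑ a ∈ Finset.Icc 1 N, volume.real (closedNbhd (engelBranch a '' S) δ) +
          (2 / N + 2 * δ) := by
        rw [htail]
        gcongr
        exact measureReal_biUnion_finset_le _ _
    _ = _ := by rw [Finset.sum_congr rfl hbranch]

theorem volume_real_closedNbhd_iUnion_image_engelBranch_le_rpow {S : Set ℝ} (hS : S ⊆ Icc 0 1)
    {s C : ℝ} (hs : 0 < s) (hs1 : s ≤ 1)
    (hC : ∀ δ ∈ Ioc 0 1, volume.real (closedNbhd S δ) ≤ C * δ ^ s) {δ : ℝ} (hδ : δ ∈ Ioc 0 1) :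
    volume.real (closedNbhd (⋃ a > 0, engelBranch a '' S) δ) ≤
      (C / s + 6) * δ ^ (s / (1 + s)) := by
  obtain ⟨hδ0, hδ1⟩ := hδ
  have hC0 : 0 ≤ C := by simpa using measureReal_nonneg.trans (hC 1 (by simp))
  set t := δ ^ (s / (1 + s)) with ht
  have ht0 : 0 < t := by positivity
  have hδt : δ ≤ t :=
    Real.self_le_rpow_of_le_one hδ0.le hδ1 (div_le_one_of_le₀ (by linarith) (by linarith))
  have ht1 : 1 ≤ 1 / t :=
    (one_le_div ht0).2 (Real.rpow_le_one hδ0.le hδ1 (by positivity))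
  set N := ⌊1 / t⌋₊
  have hN : 0 < N := Nat.floor_pos.2 ht1
  have hN' : (0 : ℝ) < N := by exact_mod_cast hN
  have hNt : N * t ≤ 1 := (le_div_iff₀ ht0).1 (Nat.floor_le (by positivity))
  have hbalance : (N * δ) ^ s ≤ t := by
    have hsplit : δ = t * δ ^ (1 / (1 + s)) := by
      rw [ht, ← Real.rpow_add hδ0, ← add_div, add_comm s, div_self (by positivity),
        Real.rpow_one]
    have hNδ : N * δ ≤ δ ^ (1 / (1 + s)) := by
      calc N * δ = N * t * δ ^ (1 / (1 + s)) := by rw [mul_assoc, ← hsplit]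
        _ ≤ δ ^ (1 / (1 + s)) := mul_le_of_le_one_left (by positivity) hNt
    calc (N * δ) ^ s ≤ (δ ^ (1 / (1 + s))) ^ s := by gcongr
      _ = t := by rw [← Real.rpow_mul hδ0.le, one_div_mul_eq_div]
  have hsum : ∑ a ∈ Finset.Icc 1 N, (a : ℝ)⁻¹ * volume.real (closedNbhd S (a * δ)) ≤ C / s * t :=
    (sum_Icc_inv_mul_le_of_le_rpow hs hs1 hC0 hC hδ0 (le_trans (by gcongr) hNt)).trans (by gcongr)
  have htail : 2 / (N : ℝ) ≤ 4 * t := by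
    have htN : 1 / t / 2 < N := Nat.div_two_lt_floor ht1
    rw [div_div, div_lt_iff₀ (by positivity)] at htN
    rw [div_le_iff₀ hN']
    linarith
  linarith [volume_real_closedNbhd_iUnion_image_engelBranch_le hS hN hδ0.le]

theorem exists_volume_real_closedNbhd_engelLengthSet_le (m : ℕ) :
    ∃ C : ℝ, ∀ δ ∈ Ioc (0 : ℝ) 1,
      volume.real (closedNbhd (engelLengthSet m) δ) ≤ C * δ ^ (1 / (m + 1) : ℝ) := by
  induction m with
  | zero =>
    refine ⟨2, fun δ hδ => ?_⟩
    have hsub : closedNbhd (engelLengthSet 0) δ ⊆ Icc (0 - δ) (0 + δ) :=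
      closedNbhd_subset_Icc (by simp [engelLengthSet_zero]) δ
    calc _ ≤ volume.real (Icc (0 - δ) (0 + δ)) := measureReal_mono hsub measure_Icc_lt_top.ne
      _ = 2 * δ ^ (1 / ((0 : ℕ) + 1) : ℝ) := by
        rw [Real.volume_real_Icc_of_le (by linarith [hδ.1]), Nat.cast_zero, zero_add, zero_add,
          one_div_one, Real.rpow_one]
        ring
  | succ k ih =>
    obtain ⟨C, hC⟩ := ih
    set s : ℝ := 1 / (k + 1) with hs
    have hs1 : s ≤ 1 := div_le_one_of_le₀ (by simp) (by positivity)
    have hexponent : 1 / ((k + 1 : ℕ) + 1) = s / (1 + s) := by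
      rw [hs]
      push_cast
      field_simp
    have hbounded : Bornology.IsBounded (⋃ a > 0, engelBranch a '' engelLengthSet k) :=
      (Metric.isBounded_Icc 0 2).subset
        (iUnion_image_engelBranch_subset_Icc (engelLengthSet_subset_Icc k))
    refine ⟨C / s + 6, fun δ hδ => ?_⟩
    rw [hexponent]
    exact (measureReal_mono (closedNbhd_mono (engelLengthSet_succ_subset k) δ)
      (volume_closedNbhd_ne_top hbounded δ)).trans
      (volume_real_closedNbhd_iUnion_image_engelBranch_le_rpow (engelLengthSet_subset_Icc k)
        (by positivity) hs1 hC hδ)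

/-! ### Lower bound -/

/-- The Engel sums with `k` digits, the `i`-th of which (from `i = 0`) is free in
`[A + i N, A + (i + 1) N)`. The digits increase, as those of an Engel fraction must. -/
noncomputable def engelGrid (N : ℕ) : ℕ → ℕ → Finset ℝ
  | 0, _ => {0}
  | k + 1, A => Finset.image₂ engelBranch (Finset.Ico A (A + N)) (engelGrid N k (A + N))

theorem le_one_sub_mul_engelBranch {a b : ℕ} (hab : a < b) {y ε : ℝ} (hy : ε ≤ 1 - a * y) :
    ε / b ≤ 1 - a * engelBranch b y := by
  have hb : (0 : ℝ) < b := by exact_mod_cast a.zero_le.trans_lt hab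
  have hab' : (a : ℝ) + 1 ≤ b := by exact_mod_cast hab
  calc ε / b ≤ (b - a - a * y) / b := by gcongr; linarith
    _ = 1 - a * engelBranch b y := by rw [engelBranch]; field_simp; ring

theorem le_engelBranch_sub_engelBranch {a b : ℕ} (ha : 0 < a) (hab : a < b) {y z ε : ℝ}
    (hy : 0 ≤ y) (hz : ε ≤ 1 - a * z) :
    ε / (a * b) ≤ engelBranch a y - engelBranch b z := by
  have : (0 : ℝ) < a := by exact_mod_cast ha
  calc ε / (a * b) = ε / b / a := by rw [div_div, mul_comm]
    _ ≤ (1 - a * engelBranch b z) / a := by gcongr; exact le_one_sub_mul_engelBranch hab hz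
    _ = engelBranch a 0 - engelBranch b z := by simp only [engelBranch]; field_simp; ring
    _ ≤ engelBranch a y - engelBranch b z := by unfold engelBranch; gcongr

theorem nonneg_of_mem_engelGrid {N k A : ℕ} {x : ℝ} (hx : x ∈ engelGrid N k A) : 0 ≤ x := by
  induction k generalizing A x with
  | zero => exact (Finset.mem_singleton.1 hx).ge
  | succ k ih =>
    obtain ⟨a, -, y, hy, rfl⟩ := Finset.mem_image₂.1 hx
    have hy0 := ih hy
    unfold engelBranch
    positivity

theorem inv_pow_le_one_sub_mul_of_mem_engelGrid {N k A L a : ℕ} (hL : A + k * N ≤ L) (ha : a < A)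
    {x : ℝ} (hx : x ∈ engelGrid N k A) : ((L : ℝ) ^ k)⁻¹ ≤ 1 - a * x := by
  induction k generalizing A x with
  | zero => simp [Finset.mem_singleton.1 hx]
  | succ k ih =>
    obtain ⟨b, hb, y, hy, rfl⟩ := Finset.mem_image₂.1 hx
    obtain ⟨hAb, hbA⟩ := Finset.mem_Ico.1 hb
    rw [add_one_mul] at hL
    have hb0 : (0 : ℝ) < b := by exact_mod_cast (by lia : 0 < b)
    have hbL : (b : ℝ) ≤ L := by exact_mod_cast (by lia : b ≤ L)
    calc ((L : ℝ) ^ (k + 1))⁻¹ = ((L : ℝ) ^ k)⁻¹ / L := by rw [pow_succ, mul_inv, div_eq_mul_inv]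
      _ ≤ ((L : ℝ) ^ k)⁻¹ / b := by gcongr
      _ ≤ _ := le_one_sub_mul_engelBranch (ha.trans_le hAb) (ih (by lia) (by lia) hy)

theorem mul_lt_one_of_mem_engelGrid {N k A a : ℕ} (ha : a < A) {x : ℝ}
    (hx : x ∈ engelGrid N k A) : a * x < 1 := by
  have hgap := inv_pow_le_one_sub_mul_of_mem_engelGrid le_rfl ha hx
  have hL : (0 : ℝ) < (A + k * N : ℕ) := by exact_mod_cast (by lia : 0 < A + k * N)
  linarith [inv_pos.2 (pow_pos hL k)]

theorem engelStep_engelBranch_of_mem_engelGrid {N k A a : ℕ} (ha : 0 < a) (haA : a < A) {y : ℝ}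
    (hy : y ∈ engelGrid N k A) : engelStep (engelBranch a y) = y := by
  have hy0 := nonneg_of_mem_engelGrid hy
  exact engelStep_engelBranch ha hy0 (by linarith [mul_lt_one_of_mem_engelGrid haA hy])

theorem engelLength_of_mem_engelGrid {N k A : ℕ} (hA : 0 < A) {x : ℝ}
    (hx : x ∈ engelGrid N k A) : engelLength x k := by
  induction k generalizing A x with
  | zero => exact engelLength_zero_iff.2 (Finset.mem_singleton.1 hx)
  | succ k ih =>
    obtain ⟨a, ha, y, hy, rfl⟩ := Finset.mem_image₂.1 hx
    obtain ⟨hAa, haA⟩ := Finset.mem_Ico.1 ha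
    have ha0 : 0 < a := hA.trans_le hAa
    refine engelLength_succ_iff.2 ⟨engelBranch_pos ha0 (nonneg_of_mem_engelGrid hy), ?_⟩
    rw [engelStep_engelBranch_of_mem_engelGrid ha0 haA hy]
    exact ih (by lia) hy

theorem engelGrid_two_subset_engelLengthSet (N k : ℕ) :
    (engelGrid N k 2 : Set ℝ) ⊆ engelLengthSet k := by
  intro x hx
  have hx1 := mul_lt_one_of_mem_engelGrid one_lt_two hx
  rw [Nat.cast_one, one_mul] at hx1
  exact ⟨⟨nonneg_of_mem_engelGrid hx, hx1.le⟩, engelLength_of_mem_engelGrid two_pos hx⟩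

theorem card_engelGrid {N k A : ℕ} (hA : 0 < A) : (engelGrid N k A).card = N ^ k := by
  induction k generalizing A with
  | zero => simp [engelGrid]
  | succ k ih =>
    rw [engelGrid, Finset.card_image₂_iff.2, ih (by lia), Nat.card_Ico, Nat.add_sub_cancel_left,
      pow_succ']
    rintro ⟨a, y⟩ ⟨ha, hy⟩ ⟨b, z⟩ ⟨hb, hz⟩ (hab : engelBranch a y = engelBranch b z)
    obtain ⟨hAa, haA⟩ := Finset.mem_Ico.1 ha
    obtain ⟨hAb, hbA⟩ := Finset.mem_Ico.1 hb
    dsimp only at ha hy hb hz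
    obtain rfl : y = z := by
      rw [← engelStep_engelBranch_of_mem_engelGrid (hA.trans_le hAa) haA hy, hab,
        engelStep_engelBranch_of_mem_engelGrid (hA.trans_le hAb) hbA hz]
    have hy0 := nonneg_of_mem_engelGrid hy
    rw [(engelBranch_left_inj (by positivity)).1 hab]

theorem pairwise_engelGrid_inv_pow_le {N k A L : ℕ} (hA : 0 < A) (hL : A + k * N ≤ L) :
    (engelGrid N k A : Set ℝ).Pairwise fun x y => ((L : ℝ) ^ (k + 1))⁻¹ ≤ |x - y| := by
  induction k generalizing A with
  | zero => simp [engelGrid]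
  | succ k ih =>
    rw [add_one_mul] at hL
    have hdigit : ∀ a ∈ Finset.Ico A (A + N), (0 : ℝ) < a ∧ (a : ℝ) ≤ L := fun a ha => by
      have h := Finset.mem_Ico.1 ha
      exact ⟨by exact_mod_cast (by lia : 0 < a), by exact_mod_cast (by lia : a ≤ L)⟩
    have hgap : ∀ a ∈ Finset.Ico A (A + N), ∀ b ∈ Finset.Ico A (A + N), a < b →
        ∀ y ∈ engelGrid N k (A + N), ∀ z ∈ engelGrid N k (A + N),
        ((L : ℝ) ^ (k + 2))⁻¹ ≤ |engelBranch a y - engelBranch b z| := by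
      intro a ha b hb hab y hy z hz
      obtain ⟨ha0, haL⟩ := hdigit a ha
      obtain ⟨hb0, hbL⟩ := hdigit b hb
      calc ((L : ℝ) ^ (k + 2))⁻¹ = ((L : ℝ) ^ k)⁻¹ / (L * L) := by
            rw [pow_add, mul_inv, div_eq_mul_inv, pow_two]
        _ ≤ ((L : ℝ) ^ k)⁻¹ / (a * b) := by gcongr
        _ ≤ engelBranch a y - engelBranch b z :=
          le_engelBranch_sub_engelBranch (by exact_mod_cast ha0) hab (nonneg_of_mem_engelGrid hy)
            (inv_pow_le_one_sub_mul_of_mem_engelGrid (by lia) (Finset.mem_Ico.1 ha).2 hz)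
        _ ≤ _ := le_abs_self _
    rintro _ hx _ hx' hne
    obtain ⟨a, ha, y, hy, rfl⟩ := Finset.mem_image₂.1 hx
    obtain ⟨b, hb, z, hz, rfl⟩ := Finset.mem_image₂.1 hx'
    rcases lt_trichotomy a b with hab | rfl | hab
    · exact hgap a ha b hb hab y hy z hz
    · obtain ⟨ha0, haL⟩ := hdigit a ha
      calc ((L : ℝ) ^ (k + 2))⁻¹ = ((L : ℝ) ^ (k + 1))⁻¹ / L := by
            rw [pow_succ, mul_inv, div_eq_mul_inv]
        _ ≤ |y - z| / a := by
          gcongr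
          exact ih (by lia) (by lia) hy hz fun hyz => hne (by rw [hyz])
        _ = |engelBranch a y - engelBranch a z| := by
          rw [engelBranch, engelBranch, ← sub_div, add_sub_add_left_eq_sub, abs_div,
            abs_of_pos ha0]
    · rw [abs_sub_comm]
      exact hgap b hb a ha hab z hz y hy

theorem pow_mul_le_volume_real_closedNbhd_engelLengthSet {m N : ℕ} {δ : ℝ} (hδ : 0 ≤ δ)
    (hsep : 2 * δ < ((2 + m * N : ℝ) ^ (m + 1))⁻¹) :
    N ^ m * (2 * δ) ≤ volume.real (closedNbhd (engelLengthSet m) δ) := by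
  have hgrid : (engelGrid N m 2 : Set ℝ).Pairwise fun x y => 2 * δ < |x - y| :=
    (pairwise_engelGrid_inv_pow_le two_pos le_rfl).imp fun {x y} h =>
      hsep.trans_le (by exact_mod_cast h)
  calc N ^ m * (2 * δ) = (engelGrid N m 2).card * (2 * δ) := by
        rw [card_engelGrid two_pos, Nat.cast_pow]
    _ ≤ volume.real (closedNbhd (engelGrid N m 2) δ) := card_mul_le_volume_real_closedNbhd hδ hgrid
    _ ≤ volume.real (closedNbhd (engelLengthSet m) δ) :=
      measureReal_mono (closedNbhd_mono (engelGrid_two_subset_engelLengthSet N m) δ)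
        (volume_closedNbhd_ne_top
          ((Metric.isBounded_Icc 0 1).subset (engelLengthSet_subset_Icc m)) δ)

theorem mul_le_volume_real_closedNbhd_engelLengthSet (m : ℕ) {t : ℝ} (ht : 0 < t)
    (htm : 3 * (m + 2) * t ≤ 1) :
    2 / (6 * (m + 2)) ^ m * t ≤ volume.real (closedNbhd (engelLengthSet m) (t ^ (m + 1))) := by
  set r : ℝ := 1 / (3 * (m + 2) * t) with hr
  have hr1 : 1 ≤ r := (one_le_div (by positivity)).2 htm
  set N := ⌊r⌋₊
  have hN : (1 : ℝ) ≤ N := by exact_mod_cast Nat.one_le_floor_iff r |>.2 hr1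
  have hNr : N * (3 * (m + 2) * t) ≤ 1 :=
    (le_div_iff₀ (by positivity)).1 (Nat.floor_le (zero_le_one.trans hr1))
  have hdigits : (2 + m * N) * t ≤ 1 / 3 := by nlinarith
  have hsep : 2 * t ^ (m + 1) < ((2 + m * N : ℝ) ^ (m + 1))⁻¹ := by
    have hpow : ((2 + m * N) * t) ^ (m + 1) ≤ 1 / 3 :=
      (pow_le_of_le_one (by positivity) (by linarith) m.succ_ne_zero).trans hdigits
    rw [← one_div, lt_div_iff₀ (by positivity), mul_assoc, ← mul_pow, mul_comm t]
    linarith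
  calc 2 / (6 * (m + 2)) ^ m * t = (r / 2) ^ m * (2 * t ^ (m + 1)) := by
        have hhalf : r / 2 = 1 / (6 * (m + 2) * t) := by rw [hr]; field_simp; norm_num
        rw [hhalf, one_div_pow, mul_pow _ t, pow_succ]
        field_simp
    _ ≤ N ^ m * (2 * t ^ (m + 1)) := by gcongr; exact (Nat.div_two_lt_floor hr1).le
    _ ≤ _ := pow_mul_le_volume_real_closedNbhd_engelLengthSet (by positivity) hsep

/-! ### The Minkowski dimension -/

theorem isTheta_volume_real_closedNbhd_engelLengthSet (m : ℕ) :
    (fun δ => volume.real (closedNbhd (engelLengthSet m) δ)) =Θ[𝓝[>] 0]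
      fun δ => δ ^ (1 / (m + 1) : ℝ) := by
  have hs : (0 : ℝ) < 1 / (m + 1) := by positivity
  constructor
  · obtain ⟨C, hC⟩ := exists_volume_real_closedNbhd_engelLengthSet_le m
    refine IsBigO.of_bound C ?_
    filter_upwards [Ioc_mem_nhdsGT one_pos] with δ hδ
    rw [Real.norm_of_nonneg measureReal_nonneg, Real.norm_of_nonneg (Real.rpow_nonneg hδ.1.le _)]
    exact hC δ hδ
  · have hsmall : Tendsto (fun δ : ℝ => 3 * (m + 2) * δ ^ (1 / (m + 1) : ℝ)) (𝓝[>] 0) (𝓝 0) := by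
      have h := ((Real.continuous_rpow_const hs.le).const_mul (3 * ((m : ℝ) + 2))).tendsto 0
      rw [Real.zero_rpow hs.ne', mul_zero] at h
      exact h.mono_left nhdsWithin_le_nhds
    refine isBigO_iff''.2 ⟨2 / (6 * (m + 2)) ^ m, by positivity, ?_⟩
    filter_upwards [self_mem_nhdsWithin, hsmall.eventually_le_const one_pos] with δ hδ hδm
    have ht : 0 < δ ^ (1 / (m + 1) : ℝ) := Real.rpow_pos_of_pos hδ _
    have hpow : (δ ^ (1 / (m + 1) : ℝ)) ^ (m + 1) = δ := by
      simpa using Real.rpow_inv_natCast_pow (le_of_lt hδ) m.succ_ne_zero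
    rw [Real.norm_of_nonneg measureReal_nonneg, Real.norm_of_nonneg ht.le]
    simpa only [hpow] using mul_le_volume_real_closedNbhd_engelLengthSet m ht hδm

/-- The Minkowski dimension of `E_m^*` is `m/(m+1)`:
`lim_{δ → 0⁺} log λ(V_δ(E_m^*)) / log δ = 1/(m+1)`. -/
theorem minkowski_dim_Estar (m : ℕ) (hm : 0 < m) :
    Tendsto (fun δ : ℝ => Real.log (volume (closedNbhd (EstarSet m) δ)).toReal / Real.log δ)
      (nhdsWithin (0 : ℝ) (Set.Ioi 0)) (nhds ((1 : ℝ) / (m + 1))) := by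
  rw [EstarSet_eq_engelLengthSet hm]
  exact tendsto_log_div_log_of_isTheta_rpow_s6 tendsto_id
    (isTheta_volume_real_closedNbhd_engelLengthSet m)
end
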